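/- arXiv:1102.5756 — 4 statements merged into one kernel-verified Lean document; each statement's English description precedes it below -/
import Mathlib

section
/- Let C be a small category and Λ a class of morphisms of C satisfying: every isomorphism belongs to Λ; pullbacks of Λ-morphisms along arbitrary morphisms exist and belong to Λ; and Λ is closed under composition. Let J_Λ be the single Λ-topology. Then a presheaf F : Cᵒᵖ → Set is a J_Λ-sheaf if and only if for every λ : D → C in Λ and every element x ∈ F(D) satisfying F(α₁)(x) = F(α₂)(x) for all pairs of morphisms α₁, α₂ : E → D with λ ∘ α₁ = λ ∘ α₂, there exists a unique y ∈ F(C) with F(λ)(y) = x. -/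
open CategoryTheory CategoryTheory.Limits Opposite

universe u

/-!
The condition on a single `l` in `Lam` says exactly that `F` is a sheaf for the singleton presieve
`{l}` (`Presieve.isSheafFor_singleton`), equivalently for the sieve it generates, which is
`J`-covering. This gives one implication. Conversely, a covering sieve `S` contains the sieve
generated by some `l` in `Lam`, and `F` is a sheaf for the latter. The sheaf condition passes to
the larger sieve `S` as soon as `F` is separated for the pullbacks of the smaller one
(`Presieve.isSheafFor_subsieve_aux`). Such a pullback contains the base change of `l`, which is
again in `Lam`, so restriction along it is injective.
-/

/-- For the single `Λ`-topology `J` on `C`, a presheaf of sets `F` is a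
`J`-sheaf if and only if for every `λ : D ⟶ X` in `Λ` and every `x ∈ F(D)` which is
compatible (i.e. `F(α₁)(x) = F(α₂)(x)` whenever `α₁ ≫ λ = α₂ ≫ λ`), there is a unique
`y ∈ F(X)` with `F(λ)(y) = x`. -/
theorem single_lambda_sheaf_iff {C : Type u} [SmallCategory C] (Lam : MorphismProperty C)
    (hiso : ∀ {X Y : C} (f : X ⟶ Y), IsIso f → Lam f)
    (hpb : ∀ {D X C' : C} (l : D ⟶ X) (f : C' ⟶ X), Lam l →
      ∃ (P : C) (t : P ⟶ D) (p : P ⟶ C'), IsPullback t p l f ∧ Lam p)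
    (hcomp : ∀ {X Y Z : C} (f : X ⟶ Y) (g : Y ⟶ Z), Lam f → Lam g → Lam (f ≫ g))
    (J : GrothendieckTopology C)
    (hJ : ∀ (X : C) (S : Sieve X), S ∈ J X ↔ ∃ (D : C) (l : D ⟶ X), Lam l ∧ S.arrows l)
    (F : Cᵒᵖ ⥤ Type u) :
    Presieve.IsSheaf J F ↔
      ∀ {D X : C} (l : D ⟶ X), Lam l → ∀ (x : F.obj (op D)),
        (∀ {E : C} (α₁ α₂ : E ⟶ D), α₁ ≫ l = α₂ ≫ l → F.map α₁.op x = F.map α₂.op x) →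
        ∃! y : F.obj (op X), F.map l.op y = x := by
  constructor
  · intro h D X l hl
    refine Presieve.isSheafFor_singleton.mp ?_
    rw [Presieve.isSheafFor_iff_generate]
    exact h _ ((hJ _ _).2 ⟨D, l, hl, Sieve.le_generate _ _ _ (Presieve.singleton_self l)⟩)
  · intro h X S hS
    obtain ⟨D, l, hl, hlS⟩ := (hJ X S).1 hS
    refine Presieve.isSheafFor_subsieve_aux F (S := Sieve.generate (Presieve.singleton l)) ?_ ?_ ?_
    · refine (Sieve.generate_le_iff _ _).2 ?_
      rintro _ _ ⟨⟩
      exact hlS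
    · rw [← Presieve.isSheafFor_iff_generate]
      exact Presieve.isSheafFor_singleton.mpr (h l hl)
    · intro Y f _ x t₁ t₂ h₁ h₂
      obtain ⟨P, t, p, hP, hp⟩ := hpb l f hl
      have hmem : ((Sieve.generate (Presieve.singleton l)).pullback f).arrows p :=
        ⟨D, t, l, Presieve.singleton_self l, hP.w⟩
      -- Both `t₁` and `t₂` restrict along `p` to the value of `x` at `p`, which is compatible.
      refine (h p hp (F.map p.op t₁) ?_).unique rfl ((h₂ p hmem).trans (h₁ p hmem).symm)
      intro E α₁ α₂ hα
      rw [← Functor.map_comp_apply, ← Functor.map_comp_apply, ← op_comp, ← op_comp, hα]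
end

section
/- Let C be a small category and Λ a class of morphisms satisfying: every isomorphism belongs to Λ; pullbacks of Λ-morphisms along arbitrary morphisms exist and belong to Λ; Λ is closed under composition. Let J_Λ be the single Λ-topology. Let I be a filtered category and D : I → Fun(Cᵒᵖ, Set) a diagram of presheaves all of whose transition morphisms D(i) → D(j) are monomorphisms (a monofiltered diagram). If every D(i) is a J_Λ-sheaf, then the colimit presheaf colim_i D(i) is a J_Λ-sheaf. -/
/-!
Coverings for the single `Λ`-topology are detected by one morphism: for `l : A ⟶ X` in `Λ`, a
presheaf that is a `J`-sheaf is a sheaf for the singleton presieve `{l}`. For that presieve the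
sheaf condition involves a single section `a` over `A`, together with (possibly infinitely many)
equations `p₁^* a = p₂^* a`. In a filtered colimit, `a` lives at some stage `i`. Because the
transition maps are monomorphisms, so is `D i ⟶ colim D` (`colimit_ι_app_injective`), hence all the
equations already hold at stage `i` simultaneously and `a` descends to `X` there.
This gives the sheaf condition of `colim D` for `{l}` (`isSheafFor_singleton_colimit`).

To pass from `{l}` to an arbitrary sieve `S` containing `l`, one checks that the section `y` over
`X` obtained from `l` also restricts correctly along any other `f : Z ⟶ X` in `S`: pulling `l` back
along `f` gives `p : P ⟶ Z` in `Λ`, the two candidates over `Z` agree after restriction along `p`,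
and `colim D` is separated for `{p}`.
-/

open CategoryTheory CategoryTheory.Limits Opposite

universe u

section

variable {C : Type u} [SmallCategory C] {I : Type u} [SmallCategory I]
  (D : I ⥤ Cᵒᵖ ⥤ Type u)

lemma colimit_ι_app_jointly_surjective {X : Cᵒᵖ} (x : (colimit D).obj X) :
    ∃ (i : I) (y : (D.obj i).obj X), (colimit.ι D i).app X y = x :=
  Types.jointly_surjective_of_isColimit
    (isColimitOfPreserves ((evaluation Cᵒᵖ (Type u)).obj X) (colimit.isColimit D)) x

variable [IsFiltered I]

lemma colimit_ι_app_injective (hmono : ∀ {i j : I} (f : i ⟶ j), Mono (D.map f)) (i : I)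
    (X : Cᵒᵖ) : Function.Injective ((colimit.ι D i).app X) := by
  intro y z h
  obtain ⟨k, f, hf⟩ := (Types.FilteredColimit.isColimit_eq_iff'
    (isColimitOfPreserves ((evaluation Cᵒᵖ (Type u)).obj X) (colimit.isColimit D)) y z).1 h
  exact (mono_iff_injective _).1 ((NatTrans.mono_iff_mono_app _).1 (hmono f) X) hf

lemma isSheafFor_singleton_colimit (hmono : ∀ {i j : I} (f : i ⟶ j), Mono (D.map f))
    {A X : C} (l : A ⟶ X) (h : ∀ i, (Presieve.singleton l).IsSheafFor (D.obj i)) :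
    (Presieve.singleton l).IsSheafFor (colimit D) := by
  rw [Presieve.isSheafFor_singleton]
  intro x hx
  have hsep : Function.Injective ((colimit D).map l.op) := by
    intro z w hzw
    obtain ⟨i, z, rfl⟩ := colimit_ι_app_jointly_surjective D z
    obtain ⟨j, w, rfl⟩ := colimit_ι_app_jointly_surjective D w
    have hz := NatTrans.congr_app (colimit.w D (IsFiltered.leftToMax i j)) (op X)
    have hw := NatTrans.congr_app (colimit.w D (IsFiltered.rightToMax i j)) (op X)
    rw [← hz, ← hw] at hzw ⊢
    simp only [NatTrans.comp_app, comp_apply] at hzw ⊢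
    exact congrArg _ (Presieve.isSeparatedFor_singleton.1 (h _).isSeparatedFor
      (colimit_ι_app_injective D hmono _ _ (by
        simpa only [NatTrans.naturality_apply] using hzw)))
  obtain ⟨i, a, rfl⟩ := colimit_ι_app_jointly_surjective D x
  obtain ⟨y, hy, -⟩ := Presieve.isSheafFor_singleton.1 (h i) a fun p₁ p₂ hp ↦
    colimit_ι_app_injective D hmono _ _ (by
      simpa only [← NatTrans.naturality_apply] using hx p₁ p₂ hp)
  have hy' : (colimit D).map l.op ((colimit.ι D i).app _ y) = (colimit.ι D i).app _ a := by
    rw [← NatTrans.naturality_apply, hy]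
  exact ⟨_, hy', fun z hz ↦ hsep (hz.trans hy'.symm)⟩

end

/-- For the single `Λ`-topology `J` on `C`, a monofiltered colimit of
`J`-sheaves of sets (computed in the presheaf category) is again a `J`-sheaf. -/
theorem monofiltered_colimit_isSheaf {C : Type u} [SmallCategory C] (Lam : MorphismProperty C)
    (hiso : ∀ {X Y : C} (f : X ⟶ Y), IsIso f → Lam f)
    (hpb : ∀ {A X B : C} (l : A ⟶ X) (f : B ⟶ X), Lam l →
      ∃ (P : C) (t : P ⟶ A) (p : P ⟶ B), IsPullback t p l f ∧ Lam p)
    (hcomp : ∀ {X Y Z : C} (f : X ⟶ Y) (g : Y ⟶ Z), Lam f → Lam g → Lam (f ≫ g))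
    (J : GrothendieckTopology C)
    (hJ : ∀ (X : C) (S : Sieve X), S ∈ J X ↔ ∃ (A : C) (l : A ⟶ X), Lam l ∧ S.arrows l)
    {I : Type u} [SmallCategory I] [IsFiltered I]
    (D : I ⥤ Cᵒᵖ ⥤ Type u)
    (hmono : ∀ {i j : I} (f : i ⟶ j), Mono (D.map f))
    (hsheaf : ∀ i : I, Presieve.IsSheaf J (D.obj i)) :
    Presieve.IsSheaf J (colimit D) := by
  have key {A X : C} (l : A ⟶ X) (hl : Lam l) :
      (Presieve.singleton l).IsSheafFor (colimit D) :=
    isSheafFor_singleton_colimit D hmono l fun i ↦ (hsheaf i).isSheafFor _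
      ((hJ _ _).2 ⟨A, l, hl, A, 𝟙 A, l, Presieve.singleton_self l, Category.id_comp l⟩)
  intro X S hS x hx
  obtain ⟨A, l, hl, hlS⟩ := (hJ X S).1 hS
  obtain ⟨y, hy, hu⟩ := Presieve.isSheafFor_singleton.1 (key l hl) (x l hlS)
    fun p₁ p₂ hp ↦ hx p₁ p₂ hlS hlS hp
  refine ⟨y, fun Z f hf ↦ ?_, fun z hz ↦ hu z (hz l hlS)⟩
  obtain ⟨P, t, p, hP, hp⟩ := hpb l f hl
  apply Presieve.isSeparatedFor_singleton.1 (key p hp).isSeparatedFor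
  rw [← hx t p hlS hf hP.w, ← hy, ← comp_apply, ← comp_apply, ← Functor.map_comp,
    ← Functor.map_comp, ← op_comp, ← op_comp, hP.w]
end

section
/- Let C be a small category and Λ a class of morphisms satisfying: every isomorphism belongs to Λ; pullbacks of Λ-morphisms along arbitrary morphisms exist and belong to Λ; Λ is closed under composition. Let J_Λ be the single Λ-topology. Then a presheaf F : Cᵒᵖ → Set is a J_Λ-sheaf if and only if for every λ : D → C in Λ, with kernel pair κ₁, κ₂ : P ⇉ D (the two projections of the pullback of λ along itself), the diagram F(C) → F(D) ⇉ F(P) given by F(λ) and the pair F(κ₁), F(κ₂) is an equalizer diagram. -/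
/-!
By the universal property of the kernel pair, the equalizer condition for `l` says precisely that
`F` is a sheaf for the one-arrow presieve `{l}`, equivalently for the sieve generated by `l`
(`isSheafFor_singleton_iff_kernel_pair`).

If `F` is a `J`-sheaf this holds for each `l` in `Λ`, since the sieve generated by `l` covers.
Conversely, a covering sieve `S` contains the sieve `R` generated by some `l` in `Λ`. The pullback
of `R` along any arrow `f` is generated by the projection of the pullback of `l` along `f`
(`pullback_generate_singleton`), which is again in `Λ`, so `F` is a sheaf for every pullback of
`R`. By `Presieve.isSheafFor_subsieve` this universal sheaf condition passes from `R` to the larger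
sieve `S`.
-/

open CategoryTheory CategoryTheory.Limits Opposite

universe u

lemma isSheafFor_singleton_iff_kernel_pair {C : Type u} [SmallCategory C] (F : Cᵒᵖ ⥤ Type u)
    {A X P : C} {l : A ⟶ X} {κ₁ κ₂ : P ⟶ A} (h : IsPullback κ₁ κ₂ l l) :
    Presieve.IsSheafFor F (Presieve.singleton l) ↔
      ∀ (x : F.obj (op A)), F.map κ₁.op x = F.map κ₂.op x →
        ∃! y : F.obj (op X), F.map l.op y = x := by
  rw [Presieve.isSheafFor_singleton]
  refine forall_congr' fun x => imp_congr_left ⟨fun hx => hx _ _ h.w, fun hx Z p₁ p₂ hp => ?_⟩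
  calc F.map p₁.op x = F.map (h.lift p₁ p₂ hp).op (F.map κ₁.op x) := by
        rw [← comp_apply, ← F.map_comp, ← op_comp, h.lift_fst]
    _ = F.map (h.lift p₁ p₂ hp).op (F.map κ₂.op x) := by rw [hx]
    _ = F.map p₂.op x := by
        rw [← comp_apply, ← F.map_comp, ← op_comp, h.lift_snd]

lemma pullback_generate_singleton {C : Type u} [SmallCategory C] {A X Y Q : C}
    {l : A ⟶ X} {f : Y ⟶ X} {t : Q ⟶ A} {p : Q ⟶ Y} (h : IsPullback t p l f) :
    (Sieve.generate (Presieve.singleton l)).pullback f =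
      Sieve.generate (Presieve.singleton p) := by
  ext Z g
  constructor
  · rintro ⟨_, a, _, ⟨⟩, ha⟩
    exact ⟨_, h.lift a g ha, p, ⟨⟩, h.lift_snd _ _ _⟩
  · rintro ⟨_, a, _, ⟨⟩, rfl⟩
    exact ⟨_, a ≫ t, l, ⟨⟩, by simp [h.w]⟩

/-- For the single `Λ`-topology `J` on `C`, a presheaf of sets `F` is a
`J`-sheaf if and only if for every `λ : D ⟶ X` in `Λ` with kernel pair
`κ₁, κ₂ : P ⇉ D` (the pullback of `λ` along itself), the diagram
`F(X) ⟶ F(D) ⇉ F(P)` is an equalizer diagram, i.e. every `x ∈ F(D)` with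
`F(κ₁)(x) = F(κ₂)(x)` lifts uniquely along `F(λ)`. -/
theorem single_lambda_sheaf_iff_kernel_pair {C : Type u} [SmallCategory C]
    (Lam : MorphismProperty C)
    (hiso : ∀ {X Y : C} (f : X ⟶ Y), IsIso f → Lam f)
    (hpb : ∀ {A X B : C} (l : A ⟶ X) (f : B ⟶ X), Lam l →
      ∃ (P : C) (t : P ⟶ A) (p : P ⟶ B), IsPullback t p l f ∧ Lam p)
    (hcomp : ∀ {X Y Z : C} (f : X ⟶ Y) (g : Y ⟶ Z), Lam f → Lam g → Lam (f ≫ g))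
    (J : GrothendieckTopology C)
    (hJ : ∀ (X : C) (S : Sieve X), S ∈ J X ↔ ∃ (A : C) (l : A ⟶ X), Lam l ∧ S.arrows l)
    (F : Cᵒᵖ ⥤ Type u) :
    Presieve.IsSheaf J F ↔
      ∀ {A X : C} (l : A ⟶ X), Lam l →
        ∀ {P : C} (κ₁ κ₂ : P ⟶ A), IsPullback κ₁ κ₂ l l →
          ∀ (x : F.obj (op A)), F.map κ₁.op x = F.map κ₂.op x →
            ∃! y : F.obj (op X), F.map l.op y = x := by
  constructor
  · intro hF A X l hl P κ₁ κ₂ hP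
    rw [← isSheafFor_singleton_iff_kernel_pair F hP, Presieve.isSheafFor_iff_generate]
    exact hF _ ((hJ _ _).2 ⟨A, l, hl, Sieve.le_generate (Presieve.singleton l) _ _ ⟨⟩⟩)
  · intro hF X S hS
    obtain ⟨A, l, hl, hlS⟩ := (hJ X S).1 hS
    have hle : Sieve.generate (Presieve.singleton l) ≤ S := by
      rw [Sieve.generate_le_iff]
      rintro _ _ ⟨⟩
      exact hlS
    refine Presieve.isSheafFor_subsieve F hle fun Y f => ?_
    obtain ⟨Q, t, p, hQ, hp⟩ := hpb l f hl
    obtain ⟨P, κ₁, κ₂, hP, -⟩ := hpb p p hp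
    rw [pullback_generate_singleton hQ, ← Presieve.isSheafFor_iff_generate,
      isSheafFor_singleton_iff_kernel_pair F hP]
    exact hF p hp κ₁ κ₂ hP
end

section
/- Let 𝒜 be a Grothendieck abelian category and let S be a set of objects of 𝒜 that is closed under finite coproducts and such that every object of 𝒜 admits an epimorphism from a (set-indexed) coproduct of objects of S. Let C be an object of 𝒜 that is finitely generated, meaning: for every filtered diagram D in 𝒜 all of whose transition morphisms are monomorphisms, the canonical map colim_i Hom(C, D(i)) → Hom(C, colim_i D(i)) is bijective. Then for every epimorphism f : F → C in 𝒜 there exist an object C' ∈ S and a morphism v : C' → F such that the composite v ≫ f : C' → C is an epimorphism. -/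
/-!
Composing an epimorphism `q : ∐ g ⟶ F` from a coproduct of objects of `S` with `f` gives an
epimorphism `p : ∐ g ⟶ X`. For a finite set `s` of indices, let `P s` be the image in `X` of the
partial coproduct over `s`. The `P s` form a directed family of subobjects of `X`, and by AB5 the
map `colim P s ⟶ X` is a monomorphism; it is an epimorphism because `p` is. So
`X ≅ colim P s`, and since `X` is finitely generated and the transition morphisms are
monomorphisms, this isomorphism factors through some `P s`, whose inclusion into `X` is then a
(split) epimorphism (`exists_epi_arrow_of_directed`). Hence the partial coproduct over this `s`
surjects onto `X` through `F`; it lies in `S` after reindexing `s` by some `Fin n`.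
-/


open CategoryTheory CategoryTheory.Limits Opposite

universe u v

/-- A directed family of subobjects of `X` which jointly covers `X` contains `X` itself, provided
every morphism from `X` to a colimit of a filtered diagram of monomorphisms factors through one of
the terms. Joint covering is expressed by testing morphisms out of `X`. -/
theorem exists_epi_arrow_of_directed {𝒜 : Type u} [Category.{v} 𝒜] [Abelian 𝒜]
    [HasColimits 𝒜] [AB5 𝒜] [HasSeparator 𝒜] (X : 𝒜)
    (hX : ∀ (I : Type v) [SmallCategory I] [IsFiltered I] (D : I ⥤ 𝒜),
      (∀ {i j : I} (f : i ⟶ j), Mono (D.map f)) →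
      ∀ u : X ⟶ colimit D, ∃ (i : I) (v : X ⟶ D.obj i), v ≫ colimit.ι D i = u)
    {J : Type v} [Preorder J] [IsDirectedOrder J] [Nonempty J] (P : J → Subobject X)
    (hP : Monotone P)
    (hcov : ∀ (Z : 𝒜) (a : X ⟶ Z), (∀ j, (P j).arrow ≫ a = 0) → a = 0) :
    ∃ j, Epi (P j).arrow := by
  have : IsGrothendieckAbelian.{v} 𝒜 := {}
  let F : J ⥤ MonoOver X := hP.functor ⋙ Subobject.representative
  let D : J ⥤ 𝒜 := F ⋙ MonoOver.forget X ⋙ Over.forget X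
  -- The arrow of `P j`, with its source typed as `D.obj j`.
  let b (j : J) : D.obj j ⟶ X := (P j).arrow
  have hb (j : J) : Mono (b j) := inferInstanceAs (Mono (P j).arrow)
  have hw {i j : J} (f : i ⟶ j) : D.map f ≫ b j = b i := MonoOver.w (F.map f)
  have hD {i j : J} (f : i ⟶ j) : Mono (D.map f) := by
    have : Mono (D.map f ≫ b j) := by rw [hw]; exact hb i
    exact mono_of_mono _ (b j)
  let d : colimit D ⟶ X := colimit.desc D (Cocone.mk X
    { app := b
      naturality := fun i j f => (hw f).trans (Category.comp_id _).symm })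
  have hd (j : J) : colimit.ι D j ≫ d = b j := colimit.ι_desc _ _
  have : Mono d :=
    IsGrothendieckAbelian.mono_of_isColimit_monoOver F (colimit.isColimit D) d hd
  have : Epi d := Preadditive.epi_of_cancel_zero _ fun {Z} a ha =>
    hcov Z a fun j => by
      change b j ≫ a = 0
      rw [← hd, Category.assoc, ha, comp_zero]
  have : IsIso d := isIso_of_mono_of_epi d
  obtain ⟨j, w, hw⟩ := hX J D hD (inv d)
  have hs : w ≫ b j = 𝟙 X := by
    rw [← hd, ← Category.assoc, hw, IsIso.inv_hom_id]
  have : Epi (w ≫ b j) := by rw [hs]; infer_instance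
  exact ⟨j, epi_of_epi w (b j)⟩

/-- Let `𝒜` be a Grothendieck abelian category (abelian, cocomplete with
exact filtered colimits (AB5), and with a separator), and `S` a set of objects closed
under finite coproducts such that every object admits an epimorphism from a coproduct
of objects of `S`.  If `X` is finitely generated — `Hom(X, −)` commutes with
monofiltered colimits, expressed elementwise — then every epimorphism `f : F ⟶ X`
admits `C' ∈ S` and `v : C' ⟶ F` with `v ≫ f` an epimorphism. -/
theorem epi_from_generator {𝒜 : Type u} [Category.{v} 𝒜] [Abelian 𝒜]
    [HasColimits 𝒜] [AB5 𝒜] [HasSeparator 𝒜]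
    (S : Set 𝒜)
    (hSfin : ∀ (n : ℕ) (g : Fin n → 𝒜), (∀ i, g i ∈ S) → (∐ g) ∈ S)
    (hSgen : ∀ F : 𝒜, ∃ (ι : Type v) (g : ι → 𝒜),
      (∀ i, g i ∈ S) ∧ ∃ q : (∐ g) ⟶ F, Epi q)
    (X : 𝒜)
    (hX : ∀ (I : Type v) [SmallCategory I] [IsFiltered I] (D : I ⥤ 𝒜),
      (∀ {i j : I} (f : i ⟶ j), Mono (D.map f)) →
      (∀ u : X ⟶ colimit D, ∃ (i : I) (v : X ⟶ D.obj i), v ≫ colimit.ι D i = u) ∧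
      (∀ (i j : I) (u : X ⟶ D.obj i) (v : X ⟶ D.obj j),
        u ≫ colimit.ι D i = v ≫ colimit.ι D j →
        ∃ (k : I) (fik : i ⟶ k) (fjk : j ⟶ k), u ≫ D.map fik = v ≫ D.map fjk)) :
    ∀ (F : 𝒜) (f : F ⟶ X), Epi f →
      ∃ C', C' ∈ S ∧ ∃ v : C' ⟶ F, Epi (v ≫ f) := by
  intro F f _
  obtain ⟨ι, g, hg, q, _⟩ := hSgen F
  let m (s : Finset ι) : (∐ fun i : s => g i) ⟶ F := Sigma.desc fun i => Sigma.ι g i ≫ q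
  have hm (s : Finset ι) (i : s) :
      Sigma.ι (fun i : s => g i) i ≫ m s = Sigma.ι g i ≫ q := Sigma.ι_desc _ _
  let P (s : Finset ι) : Subobject X := imageSubobject (m s ≫ f)
  have hP : Monotone P := fun s t hst => by
    have h : m s ≫ f = (Sigma.desc fun i : s =>
        Sigma.ι (fun i : t => g i) ⟨i, hst i.2⟩) ≫ m t ≫ f := by
      refine Sigma.hom_ext _ _ fun i => ?_
      rw [reassoc_of% (hm s i), Sigma.ι_desc_assoc, reassoc_of% (hm t ⟨i, hst i.2⟩)]
    change imageSubobject (m s ≫ f) ≤ imageSubobject (m t ≫ f)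
    rw [h]
    exact imageSubobject_comp_le _ _
  obtain ⟨s, hs⟩ := exists_epi_arrow_of_directed X (fun I _ _ D hD => (hX I D hD).1) P hP
    fun Z a ha => by
      rw [← cancel_epi f, ← cancel_epi q, comp_zero, comp_zero]
      refine Sigma.hom_ext _ _ fun i => ?_
      have h : (m {i} ≫ f) ≫ a = 0 := by
        rw [← imageSubobject_arrow_comp (m {i} ≫ f), Category.assoc, ha, comp_zero]
      rw [← reassoc_of% (hm {i} ⟨i, Finset.mem_singleton_self i⟩), ← Category.assoc (m _), h,
        comp_zero, comp_zero]
  have : Epi (m s ≫ f) := by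
    rw [← imageSubobject_arrow_comp (m s ≫ f)]
    exact epi_comp _ _
  let e : Fin s.card ≃ s := s.equivFin.symm
  let r : (∐ fun k => g (e k)) ≅ ∐ fun i : s => g i := Sigma.reindex e fun i : s => g i
  refine ⟨_, hSfin s.card (fun k => g (e k)) fun k => hg _, r.hom ≫ m s, ?_⟩
  rw [Category.assoc]
  exact epi_comp _ _
end
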